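/- Suppose the pair (𝒫,𝒟) satisfies conditions (T1)–(T3), and let (n_k)_{k≥1} be a strictly increasing sequence with Φ(n_k+1) = N_{n_k+1} (so 𝒟_{n_k+1} = {0,1,…,N_{n_k+1}−1} satisfies (T1)). Then for every k ≥ 1, every ξ with |ξ| < 1, every σ ∈ {−1,1}^ℕ, every admissible α, and every λ ∈ Λ_{n_k}^{σ,α}, one has |m_{𝒟_{n_k+1}}((ξ + λ)/P_{n_k+1})| ≥ 1 − (1/6)(3π/4)² > 0. -/

import Mathlib

open MeasureTheory Filter Finset Real
open scoped ENNReal NNReal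

noncomputable section

/-- `P n = p 1 * p 2 * ⋯ * p n`. -/
def Pprod (p : ℕ → ℕ) (n : ℕ) : ℕ := ∏ i ∈ Finset.Icc 1 n, p i

/-- The uniform probability measure on the finite set `s • E ⊆ ℝ`. -/
def unifD (E : Finset ℕ) (s : ℝ) : Measure ℝ :=
  (E.card : ℝ≥0∞)⁻¹ • ∑ d ∈ E, Measure.dirac (s * (d : ℝ))

/-- The finite convolutions `μ_n = δ_{P₁⁻¹D₁} ∗ ⋯ ∗ δ_{Pₙ⁻¹Dₙ}`. -/
def muN (p : ℕ → ℕ) (D : ℕ → Finset ℕ) : ℕ → Measure ℝ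
  | 0 => Measure.dirac 0
  | n + 1 => Measure.conv (muN p D n) (unifD (D (n + 1)) ((Pprod p (n + 1) : ℝ)⁻¹))

/-- `μ` is the weak limit of the sequence of measures `ν n`. -/
def IsWeakLimit (ν : ℕ → Measure ℝ) (μ : Measure ℝ) : Prop :=
  ∀ f : BoundedContinuousFunction ℝ ℝ,
    Tendsto (fun n => ∫ x, f x ∂ν n) atTop (nhds (∫ x, f x ∂μ))

/-- `μ` is the Moran measure attached to `(p, D)`: the infinite convolution
`δ_{P₁⁻¹D₁} ∗ δ_{P₂⁻¹D₂} ∗ ⋯`, in the sense of weak convergence. -/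
def IsMoran (p : ℕ → ℕ) (D : ℕ → Finset ℕ) (μ : Measure ℝ) : Prop :=
  IsProbabilityMeasure μ ∧ IsWeakLimit (muN p D) μ

/-- The exponentials `e_λ, λ ∈ Λ` are pairwise orthogonal in `L²(μ)`. -/
def IsOrthSet (μ : Measure ℝ) (Λ : Set ℝ) : Prop :=
  ∀ l ∈ Λ, ∀ l' ∈ Λ, l ≠ l' →
    ∫ x : ℝ, Complex.exp (2 * Real.pi * Complex.I * (l - l') * x) ∂μ = 0

/-- `Λ` is a spectrum of `μ`: the exponentials `e_λ, λ ∈ Λ` form an orthonormal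
basis of `L²(μ)` (orthonormal + maximal, i.e. complete). -/
def IsSpectrum (μ : Measure ℝ) (Λ : Set ℝ) : Prop :=
  IsOrthSet μ Λ ∧
  ∀ f : ℝ → ℂ, MemLp f 2 μ →
    (∀ l ∈ Λ, ∫ x : ℝ, f x * Complex.exp (-(2 * Real.pi * Complex.I * l * x)) ∂μ = 0) →
    f =ᵐ[μ] 0

def IsSpectralMeasure (μ : Measure ℝ) : Prop := ∃ Λ : Set ℝ, Λ.Countable ∧ IsSpectrum μ Λ

/-- Condition (T1): `D n = {0,1,…,N-1}` with `3 < N`, `N ∣ p n`, `N < p n`. -/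
def T1cond (p : ℕ → ℕ) (D : ℕ → Finset ℕ) (n : ℕ) : Prop :=
  ∃ N : ℕ, 3 < N ∧ N ∣ p n ∧ N < p n ∧ D n = Finset.range N

/-- Condition (T2) (except for the global sup condition): `D n = {0,a,b}`,
`0 < a < b`, `gcd(a,b) = 1`, `{a,b} ≡ {1,2} (mod 3)`, `3 ∣ p n`. -/
def T2cond (p : ℕ → ℕ) (D : ℕ → Finset ℕ) (n : ℕ) : Prop :=
  ∃ a b : ℕ, 0 < a ∧ a < b ∧ Nat.gcd a b = 1 ∧
    (a % 3 = 1 ∧ b % 3 = 2 ∨ a % 3 = 2 ∧ b % 3 = 1) ∧ 3 ∣ p n ∧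
    D n = ({0, a, b} : Finset ℕ)

/-- Condition (T3): `D n = {0,d}` with `0 < d < p n` and `p n / gcd (d, p n)` even.
(The decomposition `d = 2^l d'` with `d'` odd always exists, with `l` the 2-adic
valuation of `d`.) -/
def T3cond (p : ℕ → ℕ) (D : ℕ → Finset ℕ) (n : ℕ) : Prop :=
  ∃ d : ℕ, 0 < d ∧ d < p n ∧ 2 ∣ p n / Nat.gcd d (p n) ∧ D n = ({0, d} : Finset ℕ)

/-- The pair `(p, D)` satisfies conditions (T1)–(T3), including the requirement
`sup {b n / p n : n of type (T2)} < 2/3`. -/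
def SatisfiesT (p : ℕ → ℕ) (D : ℕ → Finset ℕ) : Prop :=
  (∀ n, 1 ≤ n → T1cond p D n ∨ T2cond p D n ∨ T3cond p D n) ∧
  ∃ c : ℝ, c < 2 / 3 ∧ ∀ n, 1 ≤ n → T2cond p D n → (((D n).sup id : ℕ) : ℝ) / (p n : ℝ) ≤ c

/-- `σ ∈ {-1,1}^ℕ`. -/
def IsSigma (σ : ℕ → ℤ) : Prop := ∀ n, σ n = 1 ∨ σ n = -1

/-- `α` is admissible: `α m ∈ {-⌊N/2⌋, …, N - 1 - ⌊N/2⌋}` where `N = #(D m)`,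
for every `m` with `#(D m) = N_m > 3`. -/
def Admissible (D : ℕ → Finset ℕ) (α : ℕ → ℤ) : Prop :=
  ∀ m, 1 ≤ m → 3 < (D m).card →
    -(((D m).card / 2 : ℕ) : ℤ) ≤ α m ∧
      α m ≤ ((D m).card : ℤ) - 1 - (((D m).card / 2 : ℕ) : ℤ)

/-- The largest element `d n` (resp. `b n`) of `D n`. -/
def bOf (D : ℕ → Finset ℕ) (n : ℕ) : ℕ := (D n).sup id

/-- The middle element `a n` of a digit set `{0, a, b}`. -/
def aOf (D : ℕ → Finset ℕ) (n : ℕ) : ℕ := (((D n).erase 0).erase ((D n).sup id)).sup id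

/-- `l n`: the 2-adic valuation of `d n`, i.e. `d n = 2^(l n) * d'` with `d'` odd. -/
def lOf (D : ℕ → Finset ℕ) (n : ℕ) : ℕ := padicValNat 2 ((D n).sup id)

/-- The finite set `Λ_n^{σ,α}`. -/
def LamN (p : ℕ → ℕ) (D : ℕ → Finset ℕ) (σ α : ℕ → ℤ) (n : ℕ) : Set ℝ :=
  { x | ∃ c : ℕ → ℝ,
      (∀ i, (D i).card = 2 → c i = 0 ∨ c i = (σ i : ℝ) / 2 ^ (1 + lOf D i)) ∧
      (∀ i, (D i).card = 3 → c i = 0 ∨ c i = 1 / 3 ∨ c i = -(1 / 3)) ∧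
      (∀ i, 3 < (D i).card → c i = (α i : ℝ) / ((D i).card : ℝ)) ∧
      x = ∑ i ∈ Finset.Icc 1 n, (Pprod p i : ℝ) * c i }

/-- `Λ^{σ,α} = ⋃_{n ≥ 1} Λ_n^{σ,α}`. -/
def Lam (p : ℕ → ℕ) (D : ℕ → Finset ℕ) (σ α : ℕ → ℤ) : Set ℝ :=
  ⋃ n ∈ Set.Ici 1, LamN p D σ α n

/-- The Fourier transform `μ̂(ξ) = ∫ e^{-2πixξ} dμ(x)`. -/
def FT (μ : Measure ℝ) (ξ : ℝ) : ℂ :=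
  ∫ x : ℝ, Complex.exp (-(2 * Real.pi * Complex.I * x * ξ)) ∂μ

/-- The mask polynomial `m_E(t) = (1/#E) ∑_{d ∈ E} e^{2πidt}`. -/
def mask (E : Finset ℕ) (t : ℝ) : ℂ :=
  (E.card : ℂ)⁻¹ * ∑ d ∈ E, Complex.exp (2 * Real.pi * Complex.I * (d : ℝ) * t)

end

noncomputable section

/-!
Multiplying `m_E(t)` by the unimodular factor `e^{-2πict}` and bounding the real part with
`1 - x²/2 ≤ cos x` gives `|m_E(t)| ≥ 1 - (2πt)²/2 · avg_{d ∈ E} (d - c)²` for every real `c`.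
For `E = {0, …, N-1}` and its midpoint `c` the average is `(N² - 1)/12`, so that
`|m_E(t)| ≥ 1 - (πNt)²/6`. The coefficients of a point `λ ∈ Λ_m^{σ,α}` are at most `1/2` in
absolute value, so `|λ| ≤ P_m - 1` by telescoping and `|ξ + λ| ≤ P_m`. Hence
`N |ξ + λ| / P_{m+1} ≤ N / p_{m+1}`, which is at most `1/2` under (T1).
-/

theorem one_sub_mean_sq_sub_le_norm_mask {E : Finset ℕ} (hE : E.Nonempty) (t c : ℝ) :
    1 - (2 * π * t) ^ 2 / 2 * ((∑ d ∈ E, ((d : ℝ) - c) ^ 2) / #E) ≤ ‖mask E t‖ := by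
  have hcard : (0 : ℝ) < #E := by exact_mod_cast hE.card_pos
  set S : ℂ := ∑ d ∈ E, Complex.exp (2 * π * Complex.I * (d : ℝ) * t) with hS
  have hnorm : ‖mask E t‖ = ‖S‖ / #E := by
    rw [mask, norm_mul, norm_inv, Complex.norm_natCast, inv_mul_eq_div]
  have hre : (Complex.exp ((-(2 * π * c * t) : ℝ) * Complex.I) * S).re =
      ∑ d ∈ E, cos (2 * π * t * (d - c)) := by
    rw [hS, mul_sum, Complex.re_sum]
    refine sum_congr rfl fun d _ => ?_
    rw [← Complex.exp_add, ← Complex.exp_ofReal_mul_I_re]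
    congr 2
    push_cast
    ring
  have hcos : ∑ d ∈ E, (1 - (2 * π * t) ^ 2 / 2 * ((d : ℝ) - c) ^ 2) ≤ ‖S‖ :=
    calc ∑ d ∈ E, (1 - (2 * π * t) ^ 2 / 2 * ((d : ℝ) - c) ^ 2)
        = ∑ d ∈ E, (1 - (2 * π * t * (d - c)) ^ 2 / 2) := sum_congr rfl fun d _ => by ring
      _ ≤ ∑ d ∈ E, cos (2 * π * t * (d - c)) := sum_le_sum fun d _ => one_sub_sq_div_two_le_cos
      _ = (Complex.exp ((-(2 * π * c * t) : ℝ) * Complex.I) * S).re := hre.symm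
      _ ≤ ‖Complex.exp ((-(2 * π * c * t) : ℝ) * Complex.I) * S‖ := Complex.re_le_norm _
      _ = ‖S‖ := by rw [norm_mul, Complex.norm_exp_ofReal_mul_I, one_mul]
  rw [hnorm, le_div_iff₀ hcard]
  calc (1 - (2 * π * t) ^ 2 / 2 * ((∑ d ∈ E, ((d : ℝ) - c) ^ 2) / #E)) * #E
      = ∑ d ∈ E, (1 - (2 * π * t) ^ 2 / 2 * ((d : ℝ) - c) ^ 2) := by
        rw [sum_sub_distrib, ← mul_sum, sum_const, nsmul_one]
        field_simp
    _ ≤ ‖S‖ := hcos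

theorem sum_range_sub_sq (N : ℕ) (c : ℝ) :
    ∑ d ∈ range N, ((d : ℝ) - c) ^ 2 =
      N * (((N : ℝ) ^ 2 - 1) / 12 + (((N : ℝ) - 1) / 2 - c) ^ 2) := by
  induction N with
  | zero => simp
  | succ N ih =>
    rw [sum_range_succ, ih]
    push_cast
    ring

theorem one_sub_sq_div_six_le_norm_mask_range {N : ℕ} (hN : N ≠ 0) (t : ℝ) :
    1 - ((N : ℝ) ^ 2 - 1) * (π * t) ^ 2 / 6 ≤ ‖mask (range N) t‖ := by
  have hN' : (N : ℝ) ≠ 0 := Nat.cast_ne_zero.2 hN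
  convert one_sub_mean_sq_sub_le_norm_mask (nonempty_range_iff.2 hN) t (((N : ℝ) - 1) / 2) using 1
  rw [sum_range_sub_sq, card_range]
  field_simp
  ring

theorem Pprod_succ (p : ℕ → ℕ) (n : ℕ) : Pprod p (n + 1) = Pprod p n * p (n + 1) :=
  prod_Icc_succ_top n.succ_pos p

theorem Pprod_pos {p : ℕ → ℕ} (hp : ∀ i, 1 ≤ i → 0 < p i) (n : ℕ) : 0 < Pprod p n :=
  prod_pos fun i hi => hp i (mem_Icc.1 hi).1

-- The hypothesis on `c i` says `P_i |c i| ≤ P_i - P_{i-1}`, and these bounds telescope.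
theorem abs_sum_Pprod_mul_le {p : ℕ → ℕ} {c : ℕ → ℝ} (hp : ∀ i, 1 ≤ i → 0 < p i)
    (hc : ∀ i, 1 ≤ i → |c i| ≤ 1 - (p i : ℝ)⁻¹) (n : ℕ) :
    |∑ i ∈ Icc 1 n, (Pprod p i : ℝ) * c i| ≤ (Pprod p n : ℝ) - 1 := by
  induction n with
  | zero => simp [Pprod]
  | succ n ih =>
    have hpn : (p (n + 1) : ℝ) ≠ 0 := Nat.cast_ne_zero.2 (hp _ n.succ_pos).ne'
    have hlast : |(Pprod p (n + 1) : ℝ) * c (n + 1)| ≤ Pprod p (n + 1) - Pprod p n :=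
      calc |(Pprod p (n + 1) : ℝ) * c (n + 1)|
          = Pprod p (n + 1) * |c (n + 1)| := by rw [abs_mul, Nat.abs_cast]
        _ ≤ Pprod p (n + 1) * (1 - (p (n + 1) : ℝ)⁻¹) := by gcongr; exact hc _ n.succ_pos
        _ = Pprod p (n + 1) - Pprod p n := by
          rw [Pprod_succ]
          push_cast
          field_simp
    rw [sum_Icc_succ_top n.succ_pos]
    linarith [abs_add_le (∑ i ∈ Icc 1 n, (Pprod p i : ℝ) * c i)
      ((Pprod p (n + 1) : ℝ) * c (n + 1))]

theorem IsSigma.abs_div_two_pow_le_half {σ : ℕ → ℤ} (hσ : IsSigma σ) (i l : ℕ) :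
    |(σ i : ℝ) / 2 ^ (1 + l)| ≤ 1 / 2 := by
  have habs : |(σ i : ℝ)| = 1 := by rcases hσ i with h | h <;> simp [h]
  have hpow : (2 : ℝ) ≤ 2 ^ (1 + l) := le_self_pow₀ one_le_two (by omega)
  rw [abs_div, habs, abs_of_pos (by positivity : (0 : ℝ) < 2 ^ (1 + l))]
  exact one_div_le_one_div_of_le two_pos hpow

theorem Admissible.abs_div_card_le_half {D : ℕ → Finset ℕ} {α : ℕ → ℤ} (hα : Admissible D α)
    {i : ℕ} (hi : 1 ≤ i) (hcard : 3 < #(D i)) : |(α i : ℝ) / #(D i)| ≤ 1 / 2 := by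
  have hpos : (0 : ℝ) < #(D i) := by exact_mod_cast (by omega : 0 < #(D i))
  have habs : |2 * α i| ≤ #(D i) := by
    obtain ⟨hlo, hhi⟩ := hα i hi hcard
    rw [abs_le]
    omega
  have habs' : 2 * |(α i : ℝ)| ≤ #(D i) := by
    rw [abs_mul, abs_two] at habs
    exact_mod_cast habs
  rw [abs_div, Nat.abs_cast, div_le_iff₀ hpos]
  linarith

theorem SatisfiesT.two_le_card {p : ℕ → ℕ} {D : ℕ → Finset ℕ} (hT : SatisfiesT p D) {i : ℕ}
    (hi : 1 ≤ i) : 2 ≤ #(D i) := by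
  rcases hT.1 i hi with ⟨N, hN, -, -, hD⟩ | ⟨a, b, ha, -, -, -, -, hD⟩ | ⟨d, hd, -, -, hD⟩ <;>
    rw [hD]
  · rw [card_range]
    omega
  · exact one_lt_card.2 ⟨0, by simp, a, by simp, ha.ne⟩
  · exact (card_pair hd.ne).ge

theorem two_mul_le_of_dvd_of_lt {N p : ℕ} (hdvd : N ∣ p) (hlt : N < p) : 2 * N ≤ p := by
  have := Nat.le_of_dvd (Nat.sub_pos_of_lt hlt) (Nat.dvd_sub hdvd dvd_rfl)
  omega

section LamN

variable {p : ℕ → ℕ} {D : ℕ → Finset ℕ} {σ α : ℕ → ℤ} {m : ℕ} {l : ℝ}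

theorem exists_abs_le_half_of_mem_LamN (hD : ∀ i, 1 ≤ i → 2 ≤ #(D i)) (hσ : IsSigma σ)
    (hα : Admissible D α) (hl : l ∈ LamN p D σ α m) :
    ∃ c : ℕ → ℝ, (∀ i, 1 ≤ i → |c i| ≤ 1 / 2) ∧ l = ∑ i ∈ Icc 1 m, (Pprod p i : ℝ) * c i := by
  obtain ⟨c, htwo, hthree, hlarge, hsum⟩ := hl
  refine ⟨c, fun i hi => ?_, hsum⟩
  obtain hcard | hcard | hcard : #(D i) = 2 ∨ #(D i) = 3 ∨ 3 < #(D i) := by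
    have := hD i hi
    omega
  · rcases htwo i hcard with h | h <;> rw [h]
    · norm_num
    · exact hσ.abs_div_two_pow_le_half i _
  · rcases hthree i hcard with h | h | h <;> rw [h] <;> norm_num
  · rw [hlarge i hcard]
    exact hα.abs_div_card_le_half hi hcard

theorem abs_le_of_mem_LamN (hp : ∀ i, 1 ≤ i → 1 < p i) (hD : ∀ i, 1 ≤ i → 2 ≤ #(D i))
    (hσ : IsSigma σ) (hα : Admissible D α) (hl : l ∈ LamN p D σ α m) :
    |l| ≤ (Pprod p m : ℝ) - 1 := by
  obtain ⟨c, hc, rfl⟩ := exists_abs_le_half_of_mem_LamN hD hσ hα hl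
  refine abs_sum_Pprod_mul_le (fun i hi => one_pos.trans (hp i hi)) (fun i hi => ?_) m
  have hinv : (p i : ℝ)⁻¹ ≤ 2⁻¹ := inv_anti₀ two_pos (by exact_mod_cast hp i hi)
  linarith [hc i hi]

theorem consecutive_digit_mask_lower_bound_general (hp : ∀ i, 1 ≤ i → 1 < p i)
    (hD : ∀ i, 1 ≤ i → 2 ≤ #(D i)) {N : ℕ} (hN : D (m + 1) = range N) {ξ : ℝ} (hξ : |ξ| ≤ 1)
    (hσ : IsSigma σ) (hα : Admissible D α) (hl : l ∈ LamN p D σ α m) :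
    1 - (1 / 6) * (π * (N / p (m + 1))) ^ 2 ≤
      ‖mask (D (m + 1)) ((ξ + l) / (Pprod p (m + 1) : ℝ))‖ := by
  have hN0 : N ≠ 0 := by
    have := hN ▸ hD (m + 1) m.succ_pos
    rw [card_range] at this
    omega
  have hP : (0 : ℝ) < Pprod p m :=
    Nat.cast_pos.2 (Pprod_pos (fun i hi => one_pos.trans (hp i hi)) m)
  have hpm : (0 : ℝ) < p (m + 1) := Nat.cast_pos.2 (one_pos.trans (hp _ m.succ_pos))
  set t : ℝ := (ξ + l) / (Pprod p (m + 1) : ℝ) with ht_def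
  have ht : |t| ≤ 1 / p (m + 1) := by
    have hnum : |ξ + l| ≤ Pprod p m := by
      linarith [abs_add_le ξ l, abs_le_of_mem_LamN hp hD hσ hα hl]
    rw [ht_def, Pprod_succ, Nat.cast_mul, ← div_div, abs_div, abs_div, Nat.abs_cast, Nat.abs_cast]
    gcongr
    exact div_le_one_of_le₀ hnum hP.le
  calc 1 - (1 / 6) * (π * (N / p (m + 1))) ^ 2
      = 1 - (N : ℝ) ^ 2 * (π * (1 / p (m + 1))) ^ 2 / 6 := by ring
    _ ≤ 1 - (N : ℝ) ^ 2 * (π * |t|) ^ 2 / 6 := by gcongr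
    _ ≤ 1 - ((N : ℝ) ^ 2 - 1) * (π * t) ^ 2 / 6 := by
      rw [mul_pow π |t|, sq_abs, ← mul_pow]
      linarith [sq_nonneg (π * t)]
    _ ≤ ‖mask (D (m + 1)) t‖ := hN ▸ one_sub_sq_div_six_le_norm_mask_range hN0 t

end LamN

/-- Lemma 4.6. If `D (n_k + 1)` is of type (T1), then
`|m_{D_{n_k+1}}((ξ+λ)/P_{n_k+1})| ≥ 1 - (1/6)(3π/4)² > 0` for all `k`, all `|ξ| < 1`
and all `λ ∈ Λ_{n_k}^{σ,α}`. -/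
theorem consecutive_digit_mask_lower_bound (p : ℕ → ℕ) (D : ℕ → Finset ℕ)
    (hp : ∀ n, 1 ≤ n → 1 < p n) (hT : SatisfiesT p D)
    (n : ℕ → ℕ) (hmono : StrictMono n) (hT1 : ∀ k, T1cond p D (n k + 1)) :
    (0 : ℝ) < 1 - (1 / 6) * (3 * Real.pi / 4) ^ 2 ∧
    ∀ k, ∀ ξ : ℝ, |ξ| < 1 →
      ∀ σ α : ℕ → ℤ, IsSigma σ → Admissible D α → ∀ l ∈ LamN p D σ α (n k),
        1 - (1 / 6) * (3 * Real.pi / 4) ^ 2 ≤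
          ‖mask (D (n k + 1)) ((ξ + l) / (Pprod p (n k + 1) : ℝ))‖ := by
  refine ⟨by nlinarith [pi_pos, pi_lt_d2], fun k ξ hξ σ α hσ hα l hl => ?_⟩
  obtain ⟨N, -, hdvd, hlt, hD⟩ := hT1 k
  have hratio : (N : ℝ) / p (n k + 1) ≤ 3 / 4 := by
    have h2N : (2 : ℝ) * N ≤ p (n k + 1) := by exact_mod_cast two_mul_le_of_dvd_of_lt hdvd hlt
    exact div_le_of_le_mul₀ (by positivity) (by norm_num) (by linarith)
  calc 1 - (1 / 6) * (3 * π / 4) ^ 2 = 1 - (1 / 6) * (π * (3 / 4)) ^ 2 := by ring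
    _ ≤ 1 - (1 / 6) * (π * (N / p (n k + 1))) ^ 2 := by gcongr
    _ ≤ _ := consecutive_digit_mask_lower_bound_general hp (fun _ => hT.two_le_card) hD hξ.le
      hσ hα hl

end
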